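/- arXiv:2603.08717 — 3 statements merged into one kernel-verified Lean document; each statement's English description precedes it below -/
import Mathlib

section
/- Let α > 0, 0 < u_min ≤ u_max, U = [u_min, u_max]^K, W = [−1/u_min^α, −1/u_max^α]^K. Let Θ be any nonempty set, let u_i : Θ → U for i = 1, …, m, and define Ψ_i(w, θ) = Φ_α(w) − ⟨w, u_i(θ)⟩. Then for any θ^⋆ ∈ Θ, any θ_1, …, θ_m ∈ Θ and any w_1, …, w_m ∈ W, setting R^θ = ∑_{i=1}^m Ψ_i(w_i, θ^⋆) − ∑_{i=1}^m Ψ_i(w_i, θ_i), R^w = ∑_{i=1}^m Ψ_i(w_i, θ_i) − min_{w ∈ W} ∑_{i=1}^m Ψ_i(w, θ_i), and w̄ = (1/m)∑_{i=1}^m w_i, the per-round fairness gap satisfies F_α((1/m)∑_{i=1}^m u_i(θ^⋆)) − F_α((1/m)∑_{i=1}^m u_i(θ_i)) ≤ (R^θ + R^w)/m + (1/m)∑_{i=1}^m ⟨w_i − w̄, u_i(θ^⋆)⟩. -/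
/-!
The scalar functions `f_α(u) = (u^{1-α} - 1)/(1-α)` (or `log u`) and `φ_α` are dual:
`f_α(u) ≤ φ_α(w) - w u` for `u > 0 > w`, with equality when `w = -u^{-α}`.
In the parametrization `w = -c^{-α}` the inequality says that the concave function `f_α` lies below
its tangent line at `c`, which after the scaling `t = u / c` is Bernoulli's inequality.

Let `x` and `y` be the average utilities under `θ^⋆` and under the `θ_i`. Averaging the inequality
over the `w_i` gives `F_α(x) ≤ (1/m) ∑ Φ_α(w_i) - ⟨w̄, x⟩`, while equality at
`w = -y^{-α} ∈ W` gives `min_{w ∈ W} ∑ Ψ_i(w, θ_i) ≤ m F_α(y)`. Subtracting, the terms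
`⟨w_i, u_i(θ^⋆)⟩` of the primal regret cancel against the coupling residual.
-/

/-- The generalized α-fairness function on `ℝ^K` (equation (1) of the paper). -/
noncomputable def Falpha {K : ℕ} (α : ℝ) (u : Fin K → ℝ) : ℝ :=
  if α = 1 then ∑ k, Real.log (u k)
  else ∑ k, ((u k) ^ (1 - α) - 1) / (1 - α)

/-- Scalar conjugate term `φ_α` on `(-∞, 0)`. -/
noncomputable def phiAlpha (α : ℝ) (w : ℝ) : ℝ :=
  if α = 1 then -Real.log (-w) - 1
  else (α * (-w) ^ (1 - 1 / α) - 1) / (1 - α)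

/-- `Φ_α(w) = ∑_k φ_α(w_k)`, the convex conjugate `(-F_α)^⋆`. -/
noncomputable def PhiAlpha {K : ℕ} (α : ℝ) (w : Fin K → ℝ) : ℝ :=
  ∑ k, phiAlpha α (w k)

/-- The scalar summand `f_α` of `Falpha`. -/
noncomputable def fAlpha (α u : ℝ) : ℝ :=
  if α = 1 then Real.log u else (u ^ (1 - α) - 1) / (1 - α)

lemma Falpha_eq_sum {K : ℕ} (α : ℝ) (u : Fin K → ℝ) : Falpha α u = ∑ k, fAlpha α (u k) := by
  unfold Falpha fAlpha
  split_ifs <;> rfl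

/-- Bernoulli's inequality: `f_α` lies below its tangent line at `1`. -/
lemma fAlpha_le_sub_one {α t : ℝ} (hα : 0 < α) (ht : 0 < t) : fAlpha α t ≤ t - 1 := by
  unfold fAlpha
  split_ifs with h
  · exact Real.log_le_sub_one_of_pos ht
  · rcases lt_or_gt_of_ne h with h | h
    · have hb := rpow_one_add_le_one_add_mul_self (s := t - 1) (by linarith)
        (p := 1 - α) (by linarith) (by linarith)
      rw [add_sub_cancel] at hb
      rw [div_le_iff₀ (by linarith)]
      linarith
    · have hb : 1 + (1 - α) * (t - 1) ≤ t ^ (1 - α) := by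
        -- With `p = 1 - α < 0`: `1 + p (t - 1) ≤ 1 + p log t ≤ exp (p log t) = t ^ p`.
        rw [Real.rpow_def_of_pos ht]
        have hl := mul_le_mul_of_nonpos_left (Real.log_le_sub_one_of_pos ht)
          (show 1 - α ≤ 0 by linarith)
        linarith [Real.add_one_le_exp (Real.log t * (1 - α))]
      rw [div_le_iff_of_neg (by linarith)]
      linarith

/-- The equality case of the Fenchel–Young inequality, at the dual point `-c^{-α}`. -/
lemma phiAlpha_neg_rpow {α c : ℝ} (hα : 0 < α) (hc : 0 < c) :
    phiAlpha α (-c ^ (-α)) + c ^ (-α) * c = fAlpha α c := by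
  unfold phiAlpha fAlpha
  have hm : c ^ (-α) * c = c ^ (1 - α) := by
    rw [← Real.rpow_add_one hc.ne']; congr 1; ring
  rw [neg_neg, hm]
  split_ifs with h
  · subst h
    rw [Real.log_rpow hc]; simp
  · have h' : 1 - α ≠ 0 := fun h0 => h (by linarith)
    have he : (c ^ (-α)) ^ (1 - 1 / α) = c ^ (1 - α) := by
      rw [← Real.rpow_mul hc.le]; congr 1; field_simp; ring
    rw [he]; field_simp; ring

lemma fAlpha_le_tangent {α u c : ℝ} (hα : 0 < α) (hu : 0 < u) (hc : 0 < c) :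
    fAlpha α u ≤ fAlpha α c + c ^ (-α) * (u - c) := by
  have hb := fAlpha_le_sub_one hα (div_pos hu hc)
  have hm : c ^ (-α) * c = c ^ (1 - α) := by
    rw [← Real.rpow_add_one hc.ne']; congr 1; ring
  have hp : 0 < c ^ (1 - α) := Real.rpow_pos_of_pos hc _
  have hs : c ^ (-α) * (u - c) = c ^ (1 - α) * (u / c - 1) := by
    rw [← hm]; field_simp
  have hf : fAlpha α u = fAlpha α c + c ^ (1 - α) * fAlpha α (u / c) := by
    unfold fAlpha
    split_ifs with h
    · rw [Real.log_div hu.ne' hc.ne', h]; simp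
    · rw [Real.div_rpow hu.le hc.le]
      field_simp
      ring
  rw [hf, hs]
  gcongr

/-- The Fenchel–Young inequality for the pair `f_α`, `φ_α`. -/
lemma fAlpha_le_phiAlpha {α u w : ℝ} (hα : 0 < α) (hu : 0 < u) (hw : w < 0) :
    fAlpha α u ≤ phiAlpha α w - w * u := by
  have hc : 0 < (-w) ^ (-1 / α) := Real.rpow_pos_of_pos (by linarith) _
  have hcw : ((-w) ^ (-1 / α)) ^ (-α) = -w := by
    rw [← Real.rpow_mul (by linarith), div_mul_eq_mul_div, neg_one_mul, neg_neg, div_self hα.ne',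
      Real.rpow_one]
  have ht := fAlpha_le_tangent hα hu hc
  rw [← phiAlpha_neg_rpow hα hc, hcw, neg_neg] at ht
  linarith

lemma Falpha_le_PhiAlpha {K : ℕ} {α : ℝ} {u w : Fin K → ℝ} (hα : 0 < α) (hu : ∀ k, 0 < u k)
    (hw : ∀ k, w k < 0) : Falpha α u ≤ PhiAlpha α w - ∑ k, w k * u k := by
  rw [Falpha_eq_sum, PhiAlpha, ← Finset.sum_sub_distrib]
  exact Finset.sum_le_sum fun k _ => fAlpha_le_phiAlpha hα (hu k) (hw k)

lemma PhiAlpha_neg_rpow {K : ℕ} {α : ℝ} {y : Fin K → ℝ} (hα : 0 < α) (hy : ∀ k, 0 < y k) :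
    PhiAlpha α (fun k => -y k ^ (-α)) - ∑ k, -y k ^ (-α) * y k = Falpha α y := by
  rw [Falpha_eq_sum, PhiAlpha, ← Finset.sum_sub_distrib]
  refine Finset.sum_congr rfl fun k _ => ?_
  rw [← phiAlpha_neg_rpow hα (hy k)]
  ring

lemma average_mem_Icc {m : ℕ} (hm : 0 < m) {a b : ℝ} {v : Fin m → ℝ}
    (hv : ∀ i, v i ∈ Set.Icc a b) : (1 / (m : ℝ)) * ∑ i, v i ∈ Set.Icc a b := by
  have hm' : (0 : ℝ) < m := by exact_mod_cast hm
  have hl : ∑ _i : Fin m, a ≤ ∑ i, v i := Finset.sum_le_sum fun i _ => (hv i).1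
  have hr : ∑ i, v i ≤ ∑ _i : Fin m, b := Finset.sum_le_sum fun i _ => (hv i).2
  simp only [Finset.sum_const, Finset.card_univ, Fintype.card_fin, nsmul_eq_mul] at hl hr
  rw [one_div_mul_eq_div]
  exact ⟨by rw [le_div_iff₀ hm']; linarith, by rw [div_le_iff₀ hm']; linarith⟩

/-- Only the average of the linear terms matters when the dual point is fixed. -/
lemma sum_PhiAlpha_sub {K m : ℕ} (hm : 0 < m) (α : ℝ) (w : Fin K → ℝ) (v : Fin m → Fin K → ℝ) :
    ∑ i, (PhiAlpha α w - ∑ k, w k * v i k) =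
      m * (PhiAlpha α w - ∑ k, w k * ((1 / (m : ℝ)) * ∑ i, v i k)) := by
  have hm' : (m : ℝ) ≠ 0 := by exact_mod_cast hm.ne'
  rw [Finset.sum_sub_distrib, Finset.sum_comm, mul_sub, Finset.mul_sum]
  simp only [Finset.sum_const, Finset.card_univ, Fintype.card_fin, nsmul_eq_mul]
  congr 1
  refine Finset.sum_congr rfl fun k _ => ?_
  rw [← Finset.mul_sum]
  field_simp

/-- per-round decomposition from the appendix proof of Theorem 1: the per-round
fairness gap is bounded by `(R^θ + R^w)/m` plus the coupling residual
`(1/m) ∑_i ⟨w_i − w̄, u_i(θ^⋆)⟩`, where `R^θ` is the primal regret and `R^w` the dual regret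
of the proxy functions `Ψ_i(w, θ) = Φ_α(w) − ⟨w, u_i(θ)⟩`. -/
theorem per_round_fairness_decomposition
    (K m : ℕ) (hK : 0 < K) (hm : 0 < m)
    (α : ℝ) (hα : 0 < α)
    (umin umax : ℝ) (h0 : 0 < umin) (h1 : umin ≤ umax)
    (Θ : Type*) [Nonempty Θ]
    (u : Fin m → Θ → Fin K → ℝ)
    (hu : ∀ i θ k, u i θ k ∈ Set.Icc umin umax)
    (W : Set (Fin K → ℝ))
    (hW : W = {w : Fin K → ℝ | ∀ k, w k ∈ Set.Icc (-1 / umin ^ α) (-1 / umax ^ α)})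
    (Ψ : Fin m → (Fin K → ℝ) → Θ → ℝ)
    (hΨ : ∀ i w θ, Ψ i w θ = PhiAlpha α w - ∑ k, w k * u i θ k)
    (θstar : Θ) (θs : Fin m → Θ)
    (ws : Fin m → Fin K → ℝ) (hws : ∀ i, ws i ∈ W)
    (Rθ Rw : ℝ)
    (hRθ : Rθ = ∑ i, Ψ i (ws i) θstar - ∑ i, Ψ i (ws i) (θs i))
    (hRw : Rw = ∑ i, Ψ i (ws i) (θs i) -
      sInf ((fun w => ∑ i, Ψ i w (θs i)) '' W)) :
    Falpha α (fun k => (1 / (m : ℝ)) * ∑ i, u i θstar k) -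
      Falpha α (fun k => (1 / (m : ℝ)) * ∑ i, u i (θs i) k) ≤
    (Rθ + Rw) / m + (1 / (m : ℝ)) * ∑ i, ∑ k,
      (ws i k - (1 / (m : ℝ)) * ∑ j, ws j k) * u i θstar k := by
  have hm' : (0 : ℝ) < m := by exact_mod_cast hm
  set x : Fin K → ℝ := fun k => (1 / (m : ℝ)) * ∑ i, u i θstar k with hx
  set y : Fin K → ℝ := fun k => (1 / (m : ℝ)) * ∑ i, u i (θs i) k with hy
  have hxpos : ∀ k, 0 < x k := fun k =>
    h0.trans_le (average_mem_Icc hm fun i => hu i θstar k).1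
  have hyI : ∀ k, y k ∈ Set.Icc umin umax := fun k => average_mem_Icc hm fun i => hu i (θs i) k
  have hypos : ∀ k, 0 < y k := fun k => h0.trans_le (hyI k).1
  have hWneg : ∀ w ∈ W, ∀ k, w k < 0 := by
    intro w hw k
    rw [hW] at hw
    exact (hw k).2.trans_lt
      (div_neg_of_neg_of_pos (by norm_num) (Real.rpow_pos_of_pos (h0.trans_le h1) _))
  have hΨy : ∀ w, ∑ i, Ψ i w (θs i) = m * (PhiAlpha α w - ∑ k, w k * y k) := by
    intro w
    simp only [hΨ]
    exact sum_PhiAlpha_sub hm α w fun i => u i (θs i)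
  have hyW : (fun k => -y k ^ (-α)) ∈ W := by
    rw [hW]
    intro k
    have ha : y k ^ (-α) ≤ umin ^ (-α) :=
      Real.rpow_le_rpow_of_nonpos h0 (hyI k).1 (by linarith)
    have hb : umax ^ (-α) ≤ y k ^ (-α) :=
      Real.rpow_le_rpow_of_nonpos (hypos k) (hyI k).2 (by linarith)
    rw [Real.rpow_neg h0.le, inv_eq_one_div] at ha
    rw [Real.rpow_neg (h0.le.trans h1), inv_eq_one_div] at hb
    rw [Set.mem_Icc, neg_div, neg_div]
    exact ⟨neg_le_neg ha, neg_le_neg hb⟩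
  have hInf : sInf ((fun w => ∑ i, Ψ i w (θs i)) '' W) ≤ m * Falpha α y := by
    -- `sInf` is only meaningful for sets bounded below; `m * Falpha α y` is itself a lower bound.
    have hbdd : BddBelow ((fun w => ∑ i, Ψ i w (θs i)) '' W) := by
      refine ⟨m * Falpha α y, ?_⟩
      rintro _ ⟨w, hw, rfl⟩
      simp only [hΨy]
      exact mul_le_mul_of_nonneg_left (Falpha_le_PhiAlpha hα hypos (hWneg w hw)) hm'.le
    refine (csInf_le hbdd ⟨_, hyW, rfl⟩).trans_eq ?_
    simp only [hΨy]
    rw [PhiAlpha_neg_rpow hα hypos]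
  have hFx : m * Falpha α x ≤ ∑ i, (PhiAlpha α (ws i) - ∑ k, ws i k * x k) := by
    have h := Finset.sum_le_sum fun i (_ : i ∈ Finset.univ) =>
      Falpha_le_PhiAlpha hα hxpos (hWneg (ws i) (hws i))
    simpa using h
  -- `∑ i, ⟨w̄, u_i(θ^⋆)⟩ = m ⟨w̄, x⟩ = ∑ i, ⟨w_i, x⟩`.
  have hres : ∑ i, ∑ k, (ws i k - (1 / (m : ℝ)) * ∑ j, ws j k) * u i θstar k =
      ∑ i, ∑ k, ws i k * u i θstar k - ∑ i, ∑ k, ws i k * x k := by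
    simp only [sub_mul, Finset.sum_sub_distrib]
    congr 1
    rw [Finset.sum_comm, Finset.sum_comm (f := fun i k => ws i k * x k)]
    refine Finset.sum_congr rfl fun k _ => ?_
    rw [← Finset.mul_sum, ← Finset.sum_mul, hx]
    ring
  have hΨx : ∑ i, Ψ i (ws i) θstar =
      ∑ i, PhiAlpha α (ws i) - ∑ i, ∑ k, ws i k * u i θstar k := by
    simp only [hΨ, Finset.sum_sub_distrib]
  rw [Finset.sum_sub_distrib] at hFx
  rw [hres, one_div_mul_eq_div, ← add_div, le_div_iff₀ hm', hRθ, hRw, hΨx]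
  linarith
end

section
/- Let α > 0 with α ≠ 1 and let w < 0 be a real number. Then sup_{u > 0} [w·u + (u^{1−α} − 1)/(1−α)] = (α·(−w)^{1−1/α} − 1)/(1−α), and the supremum is attained at u = (−w)^{−1/α}. -/
/-!
Put `p = 1 - α < 1`, `p ≠ 0`, let `c = (-w)^(-1/α)` be the stationary point and `A = (-w)^(1-1/α)`.
Then `w * c = -A` and `c^p = A`, which gives the value at `c`. Writing `u = t * c`, the objective
becomes `-A * t + (A * t^p - 1) / p`, so the upper bound is `A` times Bernoulli's inequality in the
form `(t^p - 1) / p ≤ t - 1` (`rpow_sub_one_div_le`), valid for every nonzero exponent `p < 1`.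
-/

/-- Bernoulli's inequality, divided by the exponent so that the cases `0 < p < 1` and `p < 0` (where
it reverses) read the same. -/
lemma rpow_sub_one_div_le {p t : ℝ} (hp : p ≠ 0) (hp1 : p < 1) (ht : 0 < t) :
    (t ^ p - 1) / p ≤ t - 1 := by
  rcases lt_or_gt_of_ne hp with h | h
  · rw [div_le_iff_of_neg h]
    -- `t^p = exp (p log t) ≥ 1 + p log t ≥ 1 + p (t - 1)`, since `log t ≤ t - 1` and `p < 0`
    have h1 := Real.add_one_le_exp (Real.log t * p)
    rw [← Real.rpow_def_of_pos ht] at h1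
    have h2 := mul_le_mul_of_nonpos_right (Real.log_le_sub_one_of_pos ht) h.le
    linarith
  · rw [div_le_iff₀ h]
    have h1 := rpow_one_add_le_one_add_mul_self (s := t - 1) (by linarith) h.le hp1.le
    rw [add_sub_cancel] at h1
    linarith

/-- closed form of the convex conjugate `(-F_α)^⋆` for `α ≠ 1`:
`sup_{u > 0} [w·u + (u^(1-α) - 1)/(1-α)] = (α·(-w)^(1-1/α) - 1)/(1-α)`,
attained at `u = (-w)^(-1/α)`. -/
theorem conjugate_closed_form_ne_one (α : ℝ) (hα : 0 < α) (hα1 : α ≠ 1)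
    (w : ℝ) (hw : w < 0) :
    (∀ u : ℝ, 0 < u →
        w * u + (u ^ (1 - α) - 1) / (1 - α) ≤ (α * (-w) ^ (1 - 1 / α) - 1) / (1 - α)) ∧
    0 < (-w) ^ (-(1 / α)) ∧
    w * (-w) ^ (-(1 / α)) + (((-w) ^ (-(1 / α))) ^ (1 - α) - 1) / (1 - α) =
      (α * (-w) ^ (1 - 1 / α) - 1) / (1 - α) := by
  have hw' : 0 < -w := by linarith
  have hp : 1 - α ≠ 0 := sub_ne_zero.mpr hα1.symm
  have hc : 0 < (-w) ^ (-(1 / α)) := Real.rpow_pos_of_pos hw' _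
  have hA : 0 < (-w) ^ (1 - 1 / α) := Real.rpow_pos_of_pos hw' _
  have hwc : w * (-w) ^ (-(1 / α)) = -(-w) ^ (1 - 1 / α) := by
    rw [sub_eq_add_neg 1, Real.rpow_add hw', Real.rpow_one]
    ring
  have hcp : ((-w) ^ (-(1 / α))) ^ (1 - α) = (-w) ^ (1 - 1 / α) := by
    rw [← Real.rpow_mul hw'.le]
    congr 1
    field_simp
    ring
  generalize (-w) ^ (-(1 / α)) = c at *
  generalize (-w) ^ (1 - 1 / α) = A at *
  refine ⟨fun u hu => ?_, hc, ?_⟩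
  · obtain ⟨t, ht, rfl⟩ : ∃ t, 0 < t ∧ u = t * c :=
      ⟨u / c, div_pos hu hc, (div_mul_cancel₀ u hc.ne').symm⟩
    have key := mul_le_mul_of_nonneg_left
      (rpow_sub_one_div_le hp (by linarith) ht) hA.le
    have e1 : w * (t * c) = -A * t := by linear_combination t * hwc
    rw [Real.mul_rpow ht.le hc.le, hcp, e1]
    have e2 : (t ^ (1 - α) * A - 1) / (1 - α)
        = A * ((t ^ (1 - α) - 1) / (1 - α)) + (A - 1) / (1 - α) := by ring
    have e3 : (α * A - 1) / (1 - α) = (A - 1) / (1 - α) - A := by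
      field_simp
      ring
    rw [e2, e3]
    linarith
  · rw [hwc, hcp]
    field_simp
    ring
end

section
/- (Projected online gradient descent, strongly convex case; logarithmic regret.) Let H be a real Hilbert space, C ⊆ H a nonempty closed convex set admitting a metric projection Π_C, μ > 0, and f_1, …, f_T : H → ℝ functions that are μ-strongly convex on C (i.e., f_t(y) ≥ f_t(x) + ⟨g, y − x⟩ + (μ/2)‖y − x‖² for every x, y ∈ C and every subgradient g of f_t at x). Let x_1 ∈ C and for t = 1, …, T let g_t be a subgradient of f_t at x_t with ‖g_t‖ ≤ G, and set x_{t+1} = Π_C(x_t − (1/(μ t)) g_t). Then for every z ∈ C: ∑_{t=1}^T f_t(x_t) − ∑_{t=1}^T f_t(z) ≤ (G²/(2μ)) (1 + log T). -/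
/-!
Write `D t = ‖x t - z‖ ^ 2`. Moving to the nearest point of `C` does not increase the distance to
`z ∈ C` (`norm_sub_sq_le_of_nearest`), so expanding the square of the unprojected step of length
`1 / (μ (t + 1))` bounds `⟪g t, x t - z⟫` by `(μ (t + 1) / 2) (D t - D (t + 1))` plus
`G ^ 2 / (2 μ (t + 1))`. The strong convexity term `-(μ / 2) D t` turns the first part into
`(μ / 2) (t D t - (t + 1) D (t + 1))` (`ogd_step_bound`). This telescopes to a nonpositive quantity,
and the remaining harmonic sum is at most `1 + log T`.
-/

open scoped RealInnerProductSpace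

/-- A nearest point `p` of a convex set to `v` is at least as close as `v` to every point `z` of
the set, because the variational inequality `⟪v - p, z - p⟫ ≤ 0` holds. -/
lemma norm_sub_sq_le_of_nearest {H : Type*} [NormedAddCommGroup H] [InnerProductSpace ℝ H]
    {C : Set H} (hC : Convex ℝ C) {v p z : H} (hp : p ∈ C)
    (hmin : ∀ y ∈ C, ‖v - p‖ ≤ ‖v - y‖) (hz : z ∈ C) :
    ‖p - z‖ ^ 2 ≤ ‖v - z‖ ^ 2 := by
  have : Nonempty C := ⟨⟨p, hp⟩⟩
  have hinf : ‖v - p‖ = ⨅ w : C, ‖v - w‖ :=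
    le_antisymm (le_ciInf fun w => hmin w w.2)
      (ciInf_le (f := fun w : C => ‖v - w‖)
        ⟨0, by rintro _ ⟨w, rfl⟩; exact norm_nonneg _⟩ ⟨p, hp⟩)
  have hvar := (norm_eq_iInf_iff_real_inner_le_zero hC hp).1 hinf z hz
  have hexp : ‖v - z‖ ^ 2 = ‖v - p‖ ^ 2 - 2 * ⟪v - p, z - p⟫ + ‖z - p‖ ^ 2 := by
    rw [← norm_sub_sq_real, sub_sub_sub_cancel_right]
  rw [norm_sub_rev p z]
  nlinarith [sq_nonneg ‖v - p‖]

/-- The regret of a single step of length `1 / (μ n)`; here `a` is the current iterate, `b` the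
next one and `u`, `w` are the values of the loss at `a` and at the comparator `z`. -/
lemma ogd_step_bound {H : Type*} [NormedAddCommGroup H] [InnerProductSpace ℝ H]
    {a b z g : H} {μ G n u w : ℝ} (hμ : 0 < μ) (hn : 0 < n) (hg : ‖g‖ ≤ G)
    (hstrong : u + ⟪g, z - a⟫ + (μ / 2) * ‖z - a‖ ^ 2 ≤ w)
    (hb : ‖b - z‖ ^ 2 ≤ ‖a - (1 / (μ * n)) • g - z‖ ^ 2) :
    u - w ≤ (μ / 2) * ((n - 1) * ‖a - z‖ ^ 2 - n * ‖b - z‖ ^ 2)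
      + G ^ 2 / (2 * μ) * n⁻¹ := by
  have hexp : ‖a - (1 / (μ * n)) • g - z‖ ^ 2
      = ‖a - z‖ ^ 2 + 2 * (1 / (μ * n)) * ⟪g, z - a⟫ + (1 / (μ * n)) ^ 2 * ‖g‖ ^ 2 := by
    rw [sub_right_comm, norm_sub_sq_real, real_inner_smul_right, norm_smul, mul_pow,
      Real.norm_eq_abs, sq_abs, real_inner_comm, ← neg_sub z a, inner_neg_right]
    ring
  have hG2 : ‖g‖ ^ 2 ≤ G ^ 2 := by gcongr
  rw [hexp] at hb
  have hscaled := mul_le_mul_of_nonneg_left hb (show 0 ≤ μ * n / 2 by positivity)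
  have hcancel : μ * n / 2 * (‖a - z‖ ^ 2 + 2 * (1 / (μ * n)) * ⟪g, z - a⟫
      + (1 / (μ * n)) ^ 2 * ‖g‖ ^ 2)
      = μ * n / 2 * ‖a - z‖ ^ 2 + ⟪g, z - a⟫ + ‖g‖ ^ 2 / (2 * μ) * n⁻¹ := by
    field_simp
  have hgrad : ‖g‖ ^ 2 / (2 * μ) * n⁻¹ ≤ G ^ 2 / (2 * μ) * n⁻¹ := by gcongr
  rw [norm_sub_rev z a] at hstrong
  linarith

/-- projected online gradient descent, strongly convex case; logarithmic
regret: for `μ`-strongly convex `f_1, …, f_T` on a closed convex set `C` of a real Hilbert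
space (expressed via the strong-subgradient inequality at the iterates), subgradients of norm
at most `G`, steps `1/(μ t)`, and any comparator `z ∈ C`,
`∑_t f_t(x_t) - ∑_t f_t(z) ≤ (G²/(2μ))(1 + log T)`. -/
theorem projected_ogd_strongly_convex_regret
    {H : Type*} [NormedAddCommGroup H] [InnerProductSpace ℝ H] [CompleteSpace H]
    (C : Set H) (hCne : C.Nonempty) (hCcl : IsClosed C) (hCcv : Convex ℝ C)
    (proj : H → H)
    (hproj : ∀ v : H, proj v ∈ C ∧ ∀ y ∈ C, ‖v - proj v‖ ≤ ‖v - y‖)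
    (T : ℕ) (hT : 0 < T) (f : Fin T → H → ℝ)
    (μ G : ℝ) (hμ : 0 < μ)
    (x : ℕ → H) (g : Fin T → H)
    (hx0 : x 0 ∈ C)
    (hstrong : ∀ (t : Fin T), ∀ y ∈ C,
      f t (x t) + ⟪g t, y - x t⟫ + (μ / 2) * ‖y - x t‖ ^ 2 ≤ f t y)
    (hG : ∀ t, ‖g t‖ ≤ G)
    (hupd : ∀ t : Fin T,
      x ((t : ℕ) + 1) = proj (x t - (1 / (μ * (((t : ℕ) : ℝ) + 1))) • g t)) :
    ∀ z ∈ C, ∑ t : Fin T, f t (x t) - ∑ t : Fin T, f t z ≤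
      (G ^ 2 / (2 * μ)) * (1 + Real.log T) := by
  intro z hz
  have hstep : ∀ t : Fin T, f t (x t) - f t z ≤
      (μ / 2) * ((t : ℕ) * ‖x t - z‖ ^ 2 - ((t + 1 : ℕ) : ℝ) * ‖x (t + 1) - z‖ ^ 2)
        + G ^ 2 / (2 * μ) * ((t + 1 : ℕ) : ℝ)⁻¹ := by
    intro t
    have hb := norm_sub_sq_le_of_nearest hCcv (hproj _).1
      (hproj (x t - (1 / (μ * (((t : ℕ) : ℝ) + 1))) • g t)).2 hz
    rw [← hupd t] at hb
    have h := ogd_step_bound hμ (by positivity) (hG t) (hstrong t z hz) hb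
    rw [add_sub_cancel_right] at h
    exact_mod_cast h
  have hharm : ∑ t ∈ Finset.range T, ((t + 1 : ℕ) : ℝ)⁻¹ ≤ 1 + Real.log T := by
    have h := harmonic_le_one_add_log T
    simpa [harmonic] using h
  calc ∑ t : Fin T, f t (x t) - ∑ t : Fin T, f t z
      = ∑ t : Fin T, (f t (x t) - f t z) := by rw [Finset.sum_sub_distrib]
    _ ≤ _ := Finset.sum_le_sum fun t _ => hstep t
    _ = ∑ t ∈ Finset.range T,
          ((μ / 2) * ((t : ℝ) * ‖x t - z‖ ^ 2 - ((t + 1 : ℕ) : ℝ) * ‖x (t + 1) - z‖ ^ 2)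
            + G ^ 2 / (2 * μ) * ((t + 1 : ℕ) : ℝ)⁻¹) :=
        Fin.sum_univ_eq_sum_range (fun t : ℕ =>
          (μ / 2) * ((t : ℝ) * ‖x t - z‖ ^ 2 - ((t + 1 : ℕ) : ℝ) * ‖x (t + 1) - z‖ ^ 2)
            + G ^ 2 / (2 * μ) * ((t + 1 : ℕ) : ℝ)⁻¹) T
    _ = (μ / 2) * (((0 : ℕ) : ℝ) * ‖x 0 - z‖ ^ 2 - (T : ℝ) * ‖x T - z‖ ^ 2)
          + G ^ 2 / (2 * μ) * ∑ t ∈ Finset.range T, ((t + 1 : ℕ) : ℝ)⁻¹ := by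
        rw [Finset.sum_add_distrib, ← Finset.mul_sum, ← Finset.mul_sum,
          Finset.sum_range_sub' (fun t : ℕ => (t : ℝ) * ‖x t - z‖ ^ 2) T]
    _ ≤ (G ^ 2 / (2 * μ)) * (1 + Real.log T) := by
        have hlast : 0 ≤ (μ / 2) * ((T : ℝ) * ‖x T - z‖ ^ 2) := by positivity
        have hsum := mul_le_mul_of_nonneg_left hharm (show 0 ≤ G ^ 2 / (2 * μ) by positivity)
        rw [Nat.cast_zero, zero_mul, zero_sub, mul_neg]
        linarith
end
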